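/- Let n ≥ 1, d ≥ 2, P ∈ Δ_d, and let N_1, …, N_d be the class counts of an i.i.d. sample X_1, …, X_n from P. For λ ≥ 1 define R_λ = Σ_{j=1}^d (2n p_j²/λ) · 1{N_j ≤ n p_j/4}. Then: (i) for any δ ∈ (e^{-n/6}, e^{-2}), the probability that R_1 ≥ (33550 d + 33550 log²(1/δ))/n is at most 2δ; and (ii) for any δ ∈ (e^{-n/6}, e^{-√d}], taking λ = log(1/δ)/√d, the probability that R_λ ≥ 91190 √d log(1/δ)/n is at most 2δ. -/

import Mathlib

open Finset

/-- Probability of an event `E` under an i.i.d. sample of size `n` from the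
distribution `p` on `{1, …, d}`. -/
noncomputable def sampleProb {n d : ℕ} (p : Fin d → ℝ) (E : Set (Fin n → Fin d)) : ℝ :=
  ∑ x : Fin n → Fin d, Set.indicator E (fun y => ∏ i, p (y i)) x

/-- Count of class `j` in the sample `x`. -/
def count {n d : ℕ} (x : Fin n → Fin d) (j : Fin d) : ℕ :=
  (Finset.univ.filter (fun i => x i = j)).card

/-- The residualTerm term `R_λ = Σ_j (2 n p_j² / λ) · 1{N_j ≤ n p_j / 4}`. -/
noncomputable def residualTerm {n d : ℕ} (p : Fin d → ℝ) (lam : ℝ) (x : Fin n → Fin d) : ℝ :=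
  ∑ j, (2 * n * p j ^ 2 / lam) * (if (count x j : ℝ) ≤ n * p j / 4 then 1 else 0)

/-!
Write `U(x)` for the set of classes with `N_j ≤ n p_j / 4`. Since `S ⊆ U(x)` forces
`∑_{j ∈ S} N_j ≤ n P(S) / 4`, one binomial Chernoff bound gives
`ℙ(S ⊆ U) ≤ ∏_{j ∈ S} e^{-n p_j / 4}` for every `S`, the bound that independence of the events
`j ∈ U` would give. Expanding `∏_{j ∈ B ∩ U} (1 + b_j)` over subsets therefore bounds its
expectation by `∏_{j ∈ B} (1 + b_j e^{-n p_j / 4})`.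

Now `n λ R_λ = 2 ∑_{j ∈ U} (n p_j)²`. With `L = log (1/δ)`, the classes with
`n p_j > M = 4 (L + log d)` all avoid `U` outside an event of probability at most `e^{-L}`. On the
remaining classes the product bound with `b_j = e^{θ (n p_j)²} - 1` controls the exponential moment
of the sum at `θ = 1 / (8 M)`, small enough that `e^{θ (n p_j)²} ≤ e^{n p_j / 8}` is beaten by the
factor `e^{-n p_j / 4}`. Markov's inequality then bounds by `e^{-L}` the probability that this sum
exceeds a threshold of order `d + L²`.
-/

section RealInequalities

lemma exp_sub_one_le_mul_exp (x : ℝ) : Real.exp x - 1 ≤ x * Real.exp x := by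
  have h : (1 - x) * Real.exp x ≤ Real.exp (-x) * Real.exp x := by
    gcongr
    exact Real.one_sub_le_exp_neg x
  rw [← Real.exp_add, neg_add_cancel, Real.exp_zero] at h
  linarith

lemma sq_mul_exp_neg_mul_le {a c : ℝ} (ha : 0 ≤ a) (hc : 0 < c) :
    a ^ 2 * Real.exp (-(c * a)) ≤ 2 / c ^ 2 := by
  have h : (c * a) ^ 2 / 2 ≤ Real.exp (c * a) := by
    simpa using Real.pow_div_factorial_le_exp (c * a) (mul_nonneg hc.le ha) 2
  rw [Real.exp_neg, ← div_eq_mul_inv, div_le_div_iff₀ (Real.exp_pos _) (by positivity)]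
  linarith

lemma exp_mul_sq_sub_one_mul_exp_neg_le {a c θ : ℝ} (ha : 0 ≤ a) (hc : 0 < c) (hθ : 0 ≤ θ)
    (hθa : θ * a ≤ c) :
    (Real.exp (θ * a ^ 2) - 1) * Real.exp (-(2 * c * a)) ≤ θ * (2 / c ^ 2) := by
  have hexponent : θ * a ^ 2 ≤ c * a := by
    rw [sq, ← mul_assoc]
    gcongr
  calc (Real.exp (θ * a ^ 2) - 1) * Real.exp (-(2 * c * a))
      ≤ θ * a ^ 2 * Real.exp (c * a) * Real.exp (-(2 * c * a)) := by
        gcongr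
        exact (exp_sub_one_le_mul_exp _).trans (by gcongr)
    _ = θ * (a ^ 2 * Real.exp (-(c * a))) := by
        rw [mul_assoc, ← Real.exp_add, mul_assoc]
        ring_nf
    _ ≤ θ * (2 / c ^ 2) := by
        gcongr
        exact sq_mul_exp_neg_mul_le ha hc

lemma mul_log_le_sq_add {L x : ℝ} (hL : 0 ≤ L) (hx : 0 ≤ x) : L * Real.log x ≤ L ^ 2 + x := by
  have hlog : Real.log x ≤ 2 * √x := by
    have h := Real.log_le_self (Real.sqrt_nonneg x)
    rw [Real.log_sqrt hx] at h
    linarith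
  calc L * Real.log x ≤ L * (2 * √x) := by gcongr
    _ ≤ L ^ 2 + √x ^ 2 := by linarith [two_mul_le_add_sq L (√x)]
    _ = L ^ 2 + x := by rw [Real.sq_sqrt hx]

end RealInequalities

variable {n d : ℕ} {p : Fin d → ℝ}

lemma pos_of_mem_stdSimplex (hp : p ∈ stdSimplex ℝ (Fin d)) : 0 < d := by
  by_contra! hd
  obtain rfl := Nat.le_zero.1 hd
  simpa using hp.2

section Sampling

/-- Expectation of `f` under an i.i.d. sample of size `n` from the distribution `p`, the
counterpart of `sampleProb` for real functions of the sample. -/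
noncomputable def sampleExpect (p : Fin d → ℝ) (f : (Fin n → Fin d) → ℝ) : ℝ :=
  ∑ x, (∏ i, p (x i)) * f x

lemma sampleExpect_mono (hp : 0 ≤ p) {f g : (Fin n → Fin d) → ℝ} (hfg : f ≤ g) :
    sampleExpect p f ≤ sampleExpect p g :=
  sum_le_sum fun x _ => mul_le_mul_of_nonneg_left (hfg x) (prod_nonneg fun i _ => hp (x i))

lemma sampleExpect_add (f g : (Fin n → Fin d) → ℝ) :
    sampleExpect p (f + g) = sampleExpect p f + sampleExpect p g := by
  simp only [sampleExpect, Pi.add_apply, mul_add, sum_add_distrib]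

lemma sampleExpect_mul_const (f : (Fin n → Fin d) → ℝ) (c : ℝ) :
    sampleExpect p (fun x => f x * c) = sampleExpect p f * c := by
  simp only [sampleExpect, sum_mul, mul_assoc]

lemma sampleExpect_sum {ι : Type*} (s : Finset ι) (f : ι → (Fin n → Fin d) → ℝ) :
    sampleExpect p (fun x => ∑ i ∈ s, f i x) = ∑ i ∈ s, sampleExpect p (f i) := by
  simp only [sampleExpect, mul_sum]
  exact sum_comm

lemma sampleExpect_prod (g : Fin d → ℝ) :
    sampleExpect p (fun x : Fin n → Fin d => ∏ i, g (x i)) = (∑ k, p k * g k) ^ n := by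
  simp only [sampleExpect, ← prod_mul_distrib]
  exact (Fintype.sum_pow (fun k => p k * g k) n).symm

lemma sampleProb_eq_sampleExpect (p : Fin d → ℝ) (E : Set (Fin n → Fin d)) :
    sampleProb p E = sampleExpect p (E.indicator 1) := by
  classical simp [sampleProb, sampleExpect, Set.indicator_apply]

lemma sampleProb_le_sampleExpect_of_one_le (hp : 0 ≤ p) {E : Set (Fin n → Fin d)}
    {f : (Fin n → Fin d) → ℝ} (hf : 0 ≤ f) (hE : ∀ x ∈ E, 1 ≤ f x) :
    sampleProb p E ≤ sampleExpect p f := by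
  rw [sampleProb_eq_sampleExpect]
  exact sampleExpect_mono hp (Set.indicator_le' hE fun x _ => hf x)

lemma sampleProb_mono (hp : 0 ≤ p) {E F : Set (Fin n → Fin d)} (hEF : E ⊆ F) :
    sampleProb p E ≤ sampleProb p F := by
  simp only [sampleProb_eq_sampleExpect]
  exact sampleExpect_mono hp
    (Set.indicator_le_indicator_of_subset hEF fun _ => zero_le_one)

lemma sampleProb_union_le (hp : 0 ≤ p) (E F : Set (Fin n → Fin d)) :
    sampleProb p (E ∪ F) ≤ sampleProb p E + sampleProb p F := by
  have hind (G : Set (Fin n → Fin d)) : 0 ≤ G.indicator (1 : (Fin n → Fin d) → ℝ) :=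
    Set.indicator_nonneg fun _ _ => zero_le_one
  rw [sampleProb_eq_sampleExpect p E, sampleProb_eq_sampleExpect p F, ← sampleExpect_add]
  refine sampleProb_le_sampleExpect_of_one_le hp (add_nonneg (hind E) (hind F)) ?_
  rintro x (hx | hx)
  · simpa [hx] using hind F x
  · simpa [hx] using hind E x

lemma sampleProb_biUnion_le (hp : 0 ≤ p) {ι : Type*} (s : Finset ι)
    (E : ι → Set (Fin n → Fin d)) :
    sampleProb p (⋃ i ∈ s, E i) ≤ ∑ i ∈ s, sampleProb p (E i) := by
  classical
  induction s using Finset.induction_on with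
  | empty => simp [sampleProb]
  | insert i s hi ih =>
    rw [set_biUnion_insert, sum_insert hi]
    exact (sampleProb_union_le hp _ _).trans (by gcongr)

lemma sampleProb_le_exp_mul_sampleExpect_exp (hp : 0 ≤ p) (f : (Fin n → Fin d) → ℝ) (r : ℝ) :
    sampleProb p {x | r ≤ f x} ≤ sampleExpect p (fun x => Real.exp (f x)) * Real.exp (-r) := by
  rw [← sampleExpect_mul_const]
  refine sampleProb_le_sampleExpect_of_one_le hp (fun x => by positivity) fun x hx => ?_
  rw [← Real.exp_add, Real.one_le_exp_iff]
  exact sub_nonneg.2 hx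

end Sampling

section Counts

lemma sum_count (x : Fin n → Fin d) (S : Finset (Fin d)) :
    ∑ j ∈ S, count x j = #{i | x i ∈ S} :=
  sum_card_fiberwise_eq_card_filter univ S x

lemma sampleExpect_exp_neg_sum_count (hp : p ∈ stdSimplex ℝ (Fin d)) (S : Finset (Fin d)) (t : ℝ) :
    sampleExpect p (fun x : Fin n → Fin d => Real.exp (-(t * (∑ j ∈ S, count x j : ℕ)))) =
      (1 - (1 - Real.exp (-t)) * ∑ j ∈ S, p j) ^ n := by
  have hfactor (x : Fin n → Fin d) : Real.exp (-(t * (∑ j ∈ S, count x j : ℕ))) =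
      ∏ i, if x i ∈ S then Real.exp (-t) else 1 := by
    rw [sum_count, prod_ite, prod_const, prod_const_one, mul_one, ← Real.exp_nat_mul]
    ring_nf
  simp only [hfactor]
  rw [sampleExpect_prod fun k => if k ∈ S then Real.exp (-t) else 1]
  congr 1
  calc ∑ k, p k * (if k ∈ S then Real.exp (-t) else 1)
      = ∑ k, (p k - if k ∈ S then (1 - Real.exp (-t)) * p k else 0) := by
        refine sum_congr rfl fun k _ => ?_
        split_ifs <;> ring
    _ = 1 - (1 - Real.exp (-t)) * ∑ j ∈ S, p j := by
        rw [sum_sub_distrib, hp.2, sum_ite_mem, univ_inter, mul_sum]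

lemma sampleProb_sum_count_le_le (hp : p ∈ stdSimplex ℝ (Fin d)) (S : Finset (Fin d))
    {t : ℝ} (ht : 0 ≤ t) (r : ℝ) :
    sampleProb p {x : Fin n → Fin d | (∑ j ∈ S, count x j : ℕ) ≤ r} ≤
      Real.exp (t * r - (1 - Real.exp (-t)) * (n * ∑ j ∈ S, p j)) := by
  set q := ∑ j ∈ S, p j
  have hq : q ≤ 1 := hp.2 ▸ sum_le_univ_sum_of_nonneg hp.1
  have hbase : 0 ≤ 1 - (1 - Real.exp (-t)) * q := by
    have := mul_le_mul_of_nonneg_left hq (sub_nonneg.2 (Real.exp_le_one_iff.2 (neg_nonpos.2 ht)))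
    linarith [Real.exp_pos (-t)]
  calc sampleProb p {x : Fin n → Fin d | (∑ j ∈ S, count x j : ℕ) ≤ r}
      ≤ sampleProb p {x | -(t * r) ≤ -(t * (∑ j ∈ S, count x j : ℕ))} :=
        sampleProb_mono hp.1 fun x hx => neg_le_neg (mul_le_mul_of_nonneg_left hx ht)
    _ ≤ (1 - (1 - Real.exp (-t)) * q) ^ n * Real.exp (t * r) := by
        simpa only [neg_neg, sampleExpect_exp_neg_sum_count hp] using
          sampleProb_le_exp_mul_sampleExpect_exp hp.1
            (fun x : Fin n → Fin d => -(t * (∑ j ∈ S, count x j : ℕ))) (-(t * r))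
    _ ≤ Real.exp (-((1 - Real.exp (-t)) * q)) ^ n * Real.exp (t * r) := by
        gcongr
        exact Real.one_sub_le_exp_neg _
    _ = Real.exp (t * r - (1 - Real.exp (-t)) * (n * q)) := by
        rw [← Real.exp_nat_mul, ← Real.exp_add]
        ring_nf

end Counts

section Undersampled

/-- The random set of classes `j` whose count satisfies `N_j ≤ n p_j / 4`, that is, the classes
that contribute to `R_λ`. -/
noncomputable def undersampled (p : Fin d → ℝ) (x : Fin n → Fin d) : Finset (Fin d) :=
  {j | (count x j : ℝ) ≤ n * p j / 4}

lemma sampleProb_subset_undersampled_le (hp : p ∈ stdSimplex ℝ (Fin d)) (S : Finset (Fin d)) :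
    sampleProb p {x : Fin n → Fin d | S ⊆ undersampled p x} ≤
      ∏ j ∈ S, Real.exp (-(n * p j / 4)) := by
  set q := ∑ j ∈ S, p j with hq
  have hq0 : 0 ≤ q := sum_nonneg fun j _ => hp.1 j
  have hsub : {x : Fin n → Fin d | S ⊆ undersampled p x} ⊆
      {x | (∑ j ∈ S, count x j : ℕ) ≤ n * q / 4} := fun x hx => by
    rw [Set.mem_ofPred_eq, Nat.cast_sum, hq, mul_sum, sum_div]
    exact sum_le_sum fun j hj => (mem_filter.1 (hx hj)).2
  have hexp : Real.exp (-1) ≤ 1 / 2 := by linarith [Real.exp_neg_one_lt_d9]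
  calc sampleProb p {x : Fin n → Fin d | S ⊆ undersampled p x}
      ≤ Real.exp (1 * (n * q / 4) - (1 - Real.exp (-1)) * (n * q)) :=
        (sampleProb_mono hp.1 hsub).trans (sampleProb_sum_count_le_le hp S zero_le_one _)
    _ ≤ Real.exp (1 * (n * q / 4) - (1 - 1 / 2) * (n * q)) := by gcongr
    _ = ∏ j ∈ S, Real.exp (-(n * p j / 4)) := by
        rw [← Real.exp_sum, sum_neg_distrib, ← sum_div, ← mul_sum, ← hq]
        ring_nf

lemma sampleExpect_prod_undersampled_le (hp : p ∈ stdSimplex ℝ (Fin d)) {B : Finset (Fin d)}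
    {b : Fin d → ℝ} (hb : ∀ j ∈ B, 0 ≤ b j) :
    sampleExpect p (fun x : Fin n → Fin d => ∏ j ∈ B ∩ undersampled p x, (1 + b j)) ≤
      ∏ j ∈ B, (1 + b j * Real.exp (-(n * p j / 4))) := by
  have hexpand (x : Fin n → Fin d) : ∏ j ∈ B ∩ undersampled p x, (1 + b j) =
      ∑ S ∈ B.powerset, {y | S ⊆ undersampled p y}.indicator 1 x * ∏ j ∈ S, b j := by
    classical
    have hpowerset : (B ∩ undersampled p x).powerset =
        B.powerset.filter (· ⊆ undersampled p x) := by
      ext S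
      simp only [mem_powerset, mem_filter, subset_inter_iff]
    simp [prod_one_add, hpowerset, sum_filter, Set.indicator_apply]
  simp only [hexpand, sampleExpect_sum, sampleExpect_mul_const, ← sampleProb_eq_sampleExpect]
  rw [prod_one_add]
  refine sum_le_sum fun S hS => ?_
  rw [prod_mul_distrib, mul_comm]
  exact mul_le_mul_of_nonneg_left (sampleProb_subset_undersampled_le hp S)
    (prod_nonneg fun j hj => hb j (mem_powerset.1 hS hj))

lemma sampleProb_exists_heavy_mem_undersampled_le (hp : p ∈ stdSimplex ℝ (Fin d)) (M : ℝ) :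
    sampleProb p {x : Fin n → Fin d | ∃ j ∈ undersampled p x, M < n * p j} ≤
      d * Real.exp (-(M / 4)) := by
  set heavy : Finset (Fin d) := {j | M < n * p j} with hheavy
  calc sampleProb p {x : Fin n → Fin d | ∃ j ∈ undersampled p x, M < n * p j}
      ≤ sampleProb p (⋃ j ∈ heavy, {x : Fin n → Fin d | {j} ⊆ undersampled p x}) :=
        sampleProb_mono hp.1 fun x ⟨j, hj, hjM⟩ => by
          simpa [hheavy] using ⟨j, hjM, hj⟩
    _ ≤ ∑ j ∈ heavy, sampleProb p {x : Fin n → Fin d | {j} ⊆ undersampled p x} :=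
        sampleProb_biUnion_le hp.1 _ _
    _ ≤ ∑ j ∈ heavy, Real.exp (-(M / 4)) := by
        refine sum_le_sum fun j hj => (sampleProb_subset_undersampled_le hp {j}).trans ?_
        rw [prod_singleton]
        have hjM : M < n * p j := (mem_filter.1 hj).2
        gcongr
    _ ≤ d * Real.exp (-(M / 4)) := by
        rw [sum_const, nsmul_eq_mul]
        gcongr
        exact card_finset_fin_le heavy

lemma sampleExpect_exp_sum_light_sq_le (hp : p ∈ stdSimplex ℝ (Fin d)) {θ : ℝ} (hθ : 0 ≤ θ)
    {B : Finset (Fin d)} (hB : ∀ j ∈ B, θ * (n * p j) ≤ 1 / 8) :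
    sampleExpect p (fun x : Fin n → Fin d =>
        Real.exp (θ * ∑ j ∈ B ∩ undersampled p x, (n * p j) ^ 2)) ≤
      Real.exp (128 * θ * #B) := by
  have hb (j : Fin d) : 0 ≤ Real.exp (θ * (n * p j) ^ 2) - 1 :=
    sub_nonneg.2 (Real.one_le_exp (by positivity))
  calc sampleExpect p (fun x : Fin n → Fin d =>
        Real.exp (θ * ∑ j ∈ B ∩ undersampled p x, (n * p j) ^ 2))
      = sampleExpect p (fun x : Fin n → Fin d =>
          ∏ j ∈ B ∩ undersampled p x, (1 + (Real.exp (θ * (n * p j) ^ 2) - 1))) := by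
        simp only [add_sub_cancel, mul_sum, Real.exp_sum]
    _ ≤ ∏ j ∈ B, (1 + (Real.exp (θ * (n * p j) ^ 2) - 1) * Real.exp (-(n * p j / 4))) :=
        sampleExpect_prod_undersampled_le hp fun j _ => hb j
    _ ≤ ∏ _j ∈ B, Real.exp (128 * θ) := by
        refine prod_le_prod (fun j _ => add_nonneg zero_le_one (mul_nonneg (hb j) (by positivity)))
          fun j hj => ?_
        have hfactor := exp_mul_sq_sub_one_mul_exp_neg_le (mul_nonneg n.cast_nonneg (hp.1 j))
          (by norm_num) hθ (hB j hj)
        ring_nf at hfactor ⊢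
        linarith [Real.add_one_le_exp (θ * 128)]
    _ = Real.exp (128 * θ * #B) := by
        rw [prod_const, ← Real.exp_nat_mul, mul_comm]

lemma sampleProb_sum_light_sq_ge_le (hp : p ∈ stdSimplex ℝ (Fin d)) {θ : ℝ} (hθ : 0 ≤ θ)
    {B : Finset (Fin d)} (hB : ∀ j ∈ B, θ * (n * p j) ≤ 1 / 8) (T : ℝ) :
    sampleProb p {x : Fin n → Fin d | T ≤ ∑ j ∈ B ∩ undersampled p x, (n * p j) ^ 2} ≤
      Real.exp (128 * θ * #B - θ * T) := by
  calc sampleProb p {x : Fin n → Fin d | T ≤ ∑ j ∈ B ∩ undersampled p x, (n * p j) ^ 2}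
      ≤ sampleProb p {x : Fin n → Fin d |
          θ * T ≤ θ * ∑ j ∈ B ∩ undersampled p x, (n * p j) ^ 2} :=
        sampleProb_mono hp.1 fun x hx => mul_le_mul_of_nonneg_left hx hθ
    _ ≤ Real.exp (128 * θ * #B) * Real.exp (-(θ * T)) :=
        (sampleProb_le_exp_mul_sampleExpect_exp hp.1 _ _).trans
          (by gcongr; exact sampleExpect_exp_sum_light_sq_le hp hθ hB)
    _ = Real.exp (128 * θ * #B - θ * T) := by
        rw [← Real.exp_add, sub_eq_add_neg]

lemma sampleProb_sum_undersampled_sq_ge_le_add (hp : p ∈ stdSimplex ℝ (Fin d)) {M : ℝ}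
    (hM : 0 < M) (T : ℝ) :
    sampleProb p {x : Fin n → Fin d | T ≤ ∑ j ∈ undersampled p x, (n * p j) ^ 2} ≤
      d * Real.exp (-(M / 4)) + Real.exp ((128 * d - T) / (8 * M)) := by
  set light : Finset (Fin d) := {j | n * p j ≤ M}
  have hsplit : {x : Fin n → Fin d | T ≤ ∑ j ∈ undersampled p x, (n * p j) ^ 2} ⊆
      {x | ∃ j ∈ undersampled p x, M < n * p j} ∪
        {x | T ≤ ∑ j ∈ light ∩ undersampled p x, (n * p j) ^ 2} := fun x hx => by
    refine or_iff_not_imp_left.2 fun hheavy => ?_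
    have hsub : undersampled p x ⊆ light := fun j hj =>
      mem_filter.2 ⟨mem_univ j, not_lt.1 fun hjM => hheavy ⟨j, hj, hjM⟩⟩
    rwa [Set.mem_ofPred_eq, inter_eq_right.2 hsub]
  have hlight : ∀ j ∈ light, 1 / (8 * M) * (n * p j) ≤ 1 / 8 := fun j hj => by
    have hjM : n * p j ≤ M := (mem_filter.1 hj).2
    rw [one_div_mul_eq_div, div_le_div_iff₀ (by positivity) (by norm_num)]
    linarith
  have hexponent : 128 * (1 / (8 * M)) * #light - 1 / (8 * M) * T ≤
      (128 * d - T) / (8 * M) := by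
    have hcard : #light ≤ d := card_finset_fin_le light
    calc 128 * (1 / (8 * M)) * #light - 1 / (8 * M) * T
        = (128 * #light - T) / (8 * M) := by ring
      _ ≤ (128 * d - T) / (8 * M) := by gcongr
  calc sampleProb p {x : Fin n → Fin d | T ≤ ∑ j ∈ undersampled p x, (n * p j) ^ 2}
      ≤ d * Real.exp (-(M / 4)) + Real.exp (128 * (1 / (8 * M)) * #light - 1 / (8 * M) * T) :=
        (sampleProb_mono hp.1 hsplit).trans <| (sampleProb_union_le hp.1 _ _).trans <|
          add_le_add (sampleProb_exists_heavy_mem_undersampled_le hp M)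
            (sampleProb_sum_light_sq_ge_le hp (by positivity) hlight T)
    _ ≤ d * Real.exp (-(M / 4)) + Real.exp ((128 * d - T) / (8 * M)) := by gcongr

lemma sampleProb_sum_undersampled_sq_ge_le (hp : p ∈ stdSimplex ℝ (Fin d)) {L : ℝ} (hL : 0 < L) :
    sampleProb p {x : Fin n → Fin d |
        160 * d + 64 * L ^ 2 ≤ ∑ j ∈ undersampled p x, (n * p j) ^ 2} ≤ 2 * Real.exp (-L) := by
  have hd : (1 : ℝ) ≤ d := by exact_mod_cast pos_of_mem_stdSimplex hp
  have hM : 0 < 4 * (L + Real.log d) := by linarith [Real.log_nonneg hd]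
  have hheavy : (d : ℝ) * Real.exp (-(4 * (L + Real.log d) / 4)) = Real.exp (-L) := by
    rw [mul_div_cancel_left₀ _ (by norm_num), neg_add, Real.exp_add,
      Real.exp_neg (Real.log d), Real.exp_log (by linarith)]
    field_simp
  have hexponent :
      (128 * d - (160 * d + 64 * L ^ 2)) / (8 * (4 * (L + Real.log d))) ≤ -L := by
    rw [div_le_iff₀ (by positivity)]
    linarith [mul_log_le_sq_add hL.le d.cast_nonneg]
  calc _ ≤ _ := sampleProb_sum_undersampled_sq_ge_le_add hp hM _
    _ ≤ Real.exp (-L) + Real.exp (-L) := by rw [hheavy]; gcongr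
    _ = 2 * Real.exp (-L) := (two_mul _).symm

end Undersampled

section ResidualTerm

lemma mul_residualTerm (p : Fin d → ℝ) (lam : ℝ) (x : Fin n → Fin d) :
    n * residualTerm p lam x = 2 / lam * ∑ j ∈ undersampled p x, (n * p j) ^ 2 := by
  rw [undersampled, sum_filter, residualTerm, mul_sum, mul_sum]
  refine sum_congr rfl fun j _ => ?_
  split_ifs <;> ring

lemma sampleProb_residualTerm_ge_le (hn : 1 ≤ n) (hp : p ∈ stdSimplex ℝ (Fin d)) {lam δ r : ℝ}
    (hlam : 0 < lam) (hδ0 : 0 < δ) (hδ1 : δ < 1)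
    (hr : (320 * d + 128 * Real.log (1 / δ) ^ 2) / (lam * n) ≤ r) :
    sampleProb p {x : Fin n → Fin d | r ≤ residualTerm p lam x} ≤ 2 * δ := by
  have hn0 : (0 : ℝ) < n := by exact_mod_cast hn
  set L := Real.log (1 / δ) with hL
  have hL0 : 0 < L := Real.log_pos (by rwa [one_lt_div hδ0])
  have hδ : Real.exp (-L) = δ := by rw [hL, one_div, Real.log_inv, neg_neg, Real.exp_log hδ0]
  rw [← hδ]
  refine (sampleProb_mono hp.1 fun x hx => ?_).trans (sampleProb_sum_undersampled_sq_ge_le hp hL0)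
  have h : (320 * d + 128 * L ^ 2) / lam ≤
      (2 * ∑ j ∈ undersampled p x, (n * p j) ^ 2) / lam := by
    rw [mul_div_right_comm 2, ← mul_residualTerm, mul_comm (n : ℝ), ← div_le_iff₀ hn0, div_div]
    exact hr.trans hx
  have := (div_le_div_iff_of_pos_right hlam).1 h
  rw [Set.mem_ofPred_eq]
  linarith

theorem tail_residual_general (n d : ℕ) (hn : 1 ≤ n) (p : Fin d → ℝ)
    (hp0 : ∀ j, 0 ≤ p j) (hp1 : ∑ j, p j = 1) :
    (∀ δ : ℝ, 0 < δ → δ < 1 →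
      sampleProb p {x : Fin n → Fin d |
        (33550 * d + 33550 * Real.log (1 / δ) ^ 2) / n ≤ residualTerm p 1 x} ≤ 2 * δ) ∧
    (∀ δ : ℝ, 0 < δ → δ ≤ Real.exp (-Real.sqrt d) →
      sampleProb p {x : Fin n → Fin d |
        91190 * Real.sqrt d * Real.log (1 / δ) / n ≤
          residualTerm p (Real.log (1 / δ) / Real.sqrt d) x} ≤ 2 * δ) := by
  have hp : p ∈ stdSimplex ℝ (Fin d) := ⟨hp0, hp1⟩
  refine ⟨fun δ hδ0 hδ1 => ?_, fun δ hδ0 hδ => ?_⟩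
  · refine sampleProb_residualTerm_ge_le hn hp one_pos hδ0 hδ1 ?_
    rw [one_mul]
    gcongr <;> norm_num
  · have hs : 0 < √(d : ℝ) := Real.sqrt_pos.2 (Nat.cast_pos.2 (pos_of_mem_stdSimplex hp))
    have hδ1 : δ < 1 := hδ.trans_lt (Real.exp_lt_one_iff.2 (neg_lt_zero.2 hs))
    have hL : √(d : ℝ) ≤ Real.log (1 / δ) := by
      rw [one_div, Real.log_inv]
      linarith [(Real.log_le_iff_le_exp hδ0).2 hδ]
    have hL0 : 0 < Real.log (1 / δ) := hs.trans_le hL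
    refine sampleProb_residualTerm_ge_le hn hp (div_pos hL0 hs) hδ0 hδ1 ?_
    generalize Real.log (1 / δ) = L at hL hL0 ⊢
    have hdL : (d : ℝ) ≤ L ^ 2 := Real.sqrt_le_left hL0.le |>.1 hL
    rw [← div_div]
    gcongr
    rw [div_le_iff₀ (div_pos hL0 hs)]
    calc 320 * d + 128 * L ^ 2 ≤ 91190 * L ^ 2 := by linarith [sq_nonneg L]
      _ = 91190 * √d * L * (L / √d) := by field_simp

end ResidualTerm

theorem tail_residual (n d : ℕ) (hn : 1 ≤ n) (hd : 2 ≤ d)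
    (p : Fin d → ℝ) (hp0 : ∀ j, 0 ≤ p j) (hp1 : ∑ j, p j = 1) :
    (∀ δ : ℝ, Real.exp (-(n : ℝ) / 6) < δ → δ < Real.exp (-2) →
      sampleProb p {x : Fin n → Fin d |
        (33550 * d + 33550 * Real.log (1 / δ) ^ 2) / n ≤ residualTerm p 1 x} ≤ 2 * δ) ∧
    (∀ δ : ℝ, Real.exp (-(n : ℝ) / 6) < δ → δ ≤ Real.exp (-Real.sqrt d) →
      sampleProb p {x : Fin n → Fin d |
        91190 * Real.sqrt d * Real.log (1 / δ) / n ≤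
          residualTerm p (Real.log (1 / δ) / Real.sqrt d) x} ≤ 2 * δ) := by
  obtain ⟨h₁, h₂⟩ := tail_residual_general n d hn p hp0 hp1
  exact ⟨fun δ hδ hδ2 => h₁ δ ((Real.exp_pos _).trans hδ) (hδ2.trans (by simp)),
    fun δ hδ hδd => h₂ δ ((Real.exp_pos _).trans hδ) hδd⟩
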